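/- arXiv:1609.00284 — 3 statements merged into one kernel-verified Lean document; each statement's English description precedes it below -/
import Mathlib

section
/- Let k, q, r be natural numbers with q ≥ k+1, q ≥ 3, r ≥ k-1, and r ≥ 1. Then the path P_{q+r} and the disjoint union C_q + P_r have the same k-deck. -/
open SimpleGraph

/-- `SameDeck G G' k`: `G` and `G'` have the same `k`-deck, i.e. for every simple graph `H`
on `k` vertices, the number of `k`-element vertex subsets of `G` inducing a subgraph
isomorphic to `H` equals the corresponding number for `G'`. -/
def SameDeck {V W : Type*} [Fintype V] [Fintype W]
    (G : SimpleGraph V) (G' : SimpleGraph W) (k : ℕ) : Prop :=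
  ∀ H : SimpleGraph (Fin k),
    Set.ncard {s : Finset V | s.card = k ∧ Nonempty ((G.induce (↑s : Set V)) ≃g H)} =
    Set.ncard {s : Finset W | s.card = k ∧ Nonempty ((G'.induce (↑s : Set W)) ≃g H)}

/-- `copies G H = s(G,H)`, the number of vertex subsets of `G` whose induced subgraph is
isomorphic to `H`. -/
noncomputable def copies {V W : Type*} [Fintype V]
    (G : SimpleGraph V) (H : SimpleGraph W) : ℕ :=
  Set.ncard {s : Finset V | Nonempty ((G.induce (↑s : Set V)) ≃g H)}

/-- The connected component `c` of `G` is a path on `m` vertices. -/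
def CompIsPath {V : Type*} (G : SimpleGraph V) (c : G.ConnectedComponent) (m : ℕ) : Prop :=
  Nonempty ((G.induce c.supp) ≃g pathGraph m)

/-- The connected component `c` of `G` is a cycle on `m` vertices (`m ≥ 3`). -/
def CompIsCycle {V : Type*} (G : SimpleGraph V) (c : G.ConnectedComponent) (m : ℕ) : Prop :=
  3 ≤ m ∧ Nonempty ((G.induce c.supp) ≃g cycleGraph m)

/-- A linear forest: every connected component is a path. -/
def IsLinearForest {V : Type*} (G : SimpleGraph V) : Prop :=
  ∀ c : G.ConnectedComponent, ∃ m : ℕ, CompIsPath G c m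

/-!
Suppose the vertices of two graphs carry labels and, for each of more than `k` labels `i`, there is
a label-preserving bijection between the vertex sets that respects adjacency away from label `i`.
A `k`-set of vertices misses one of these labels. Choosing the missed label as a function of the set
of labels that do occur, and applying the corresponding bijection, gives a bijection between the
`k`-sets of the two graphs under which corresponding sets induce isomorphic subgraphs.

For `P_{q+r}` and `C_q + P_r`, write both vertex sets as two rows of lengths `q` and `r`. The first
row is closed up into a cycle in `C_q + P_r`, and continues into the second row in `P_{q+r}`.
Cutting both rows before position `i` and exchanging the two initial segments turns one graph into
the other, up to edges leaving the vertices right before the cuts; so a vertex is labelled by the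
cut right after it, the last vertex of the first row by the cut before position `0`.
-/

section Labels

variable {V W ι : Type*} {G : SimpleGraph V} {G' : SimpleGraph W}

theorem nonempty_induce_iso_induce_map (e : V ≃ W) {s : Finset V}
    (h : ∀ x ∈ s, ∀ y ∈ s, G.Adj x y ↔ G'.Adj (e x) (e y)) :
    Nonempty (G.induce (s : Set V) ≃g G'.induce (s.map e.toEmbedding : Set W)) := by
  refine ⟨⟨e.subtypeEquiv fun x => by simp, ?_⟩⟩
  rintro ⟨x, hx⟩ ⟨y, hy⟩
  simpa using (h x hx y hy).symm

theorem image_map_of_comp_eq [DecidableEq ι] {c : V → ι} {c' : W → ι} {e : V ≃ W}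
    (h : ∀ x, c' (e x) = c x) (s : Finset V) :
    (s.map e.toEmbedding).image c' = s.image c := by
  classical
  rw [Finset.map_eq_image, Finset.image_image]
  exact Finset.image_congr fun x _ => h x

theorem sameDeck_of_bijective [Fintype V] [Fintype W] {k : ℕ} {φ : Finset V → Finset W}
    (hφ : Function.Bijective φ) (hcard : ∀ s : Finset V, (φ s).card = s.card)
    (hiso : ∀ s : Finset V, s.card = k →
      Nonempty (G.induce (s : Set V) ≃g G'.induce (φ s : Set W))) :
    SameDeck G G' k := by
  intro H
  refine Set.ncard_congr (fun s _ => φ s) ?_ (fun s t _ _ hst => hφ.injective hst) ?_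
  · rintro s ⟨hs, ⟨f⟩⟩
    obtain ⟨g⟩ := hiso s hs
    exact ⟨(hcard s).trans hs, ⟨g.symm.trans f⟩⟩
  · rintro t ⟨ht, ⟨f⟩⟩
    obtain ⟨s, rfl⟩ := hφ.surjective t
    have hs : s.card = k := (hcard s).symm.trans ht
    obtain ⟨g⟩ := hiso s hs
    exact ⟨s, ⟨hs, ⟨g.trans f⟩⟩, rfl⟩

theorem bijective_map_of_image_labels [DecidableEq ι] {c : V → ι} {c' : W → ι}
    {e : Finset ι → V ≃ W} (hlabel : ∀ T x, c' (e T x) = c x) :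
    Function.Bijective fun s : Finset V => s.map (e (s.image c)).toEmbedding := by
  constructor
  · intro s t (hst : s.map _ = t.map _)
    have himage : s.image c = t.image c := by
      rw [← image_map_of_comp_eq (hlabel _) s, hst, image_map_of_comp_eq (hlabel _)]
    rwa [himage, Finset.map_inj] at hst
  · intro t
    have hsymm (y : W) : c ((e (t.image c')).symm y) = c' y := by
      rw [← hlabel (t.image c'), Equiv.apply_symm_apply]
    refine ⟨t.map (e (t.image c')).symm.toEmbedding, ?_⟩
    ext
    simp [image_map_of_comp_eq hsymm]

theorem sameDeck_of_labels [Fintype V] [Fintype W] {k : ℕ} {I : Finset ι} (hI : k < I.card)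
    (c : V → ι) (c' : W → ι) (e : ι → V ≃ W) (hlabel : ∀ i ∈ I, ∀ x, c' (e i x) = c x)
    (hadj : ∀ i ∈ I, ∀ x y, c x ≠ i → c y ≠ i → (G.Adj x y ↔ G'.Adj (e i x) (e i y))) :
    SameDeck G G' k := by
  classical
  have exists_missed (T : Finset ι) : ∃ i ∈ I, T.card ≤ k → i ∉ T := by
    by_cases hT : T.card ≤ k
    · obtain ⟨i, hi, hiT⟩ := Finset.exists_mem_notMem_of_card_lt_card (hT.trans_lt hI)
      exact ⟨i, hi, fun _ => hiT⟩
    · obtain ⟨i, hi⟩ := Finset.card_pos.mp (Nat.zero_lt_of_lt hI)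
      exact ⟨i, hi, fun h => absurd h hT⟩
  choose missed missed_mem missed_notMem using exists_missed
  refine sameDeck_of_bijective
    (bijective_map_of_image_labels fun T => hlabel (missed T) (missed_mem T))
    (fun s => Finset.card_map _) fun s hs => ?_
  have label_ne (x : V) (hx : x ∈ s) : c x ≠ missed (s.image c) := fun h =>
    missed_notMem (s.image c) (Finset.card_image_le.trans_eq hs)
      (h ▸ Finset.mem_image_of_mem c hx)
  exact nonempty_induce_iso_induce_map _ fun x hx y hy =>
    hadj _ (missed_mem _) x y (label_ne x hx) (label_ne y hy)

end Labels

theorem cycleGraph_adj_iff_mod {q : ℕ} (hq : 2 ≤ q) (a b : Fin q) :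
    (cycleGraph q).Adj a b ↔ ((a : ℕ) + 1) % q = b ∨ ((b : ℕ) + 1) % q = a := by
  obtain ⟨n, rfl⟩ := Nat.exists_eq_add_of_le' hq
  rw [cycleGraph_adj, sub_eq_iff_eq_add', sub_eq_iff_eq_add', or_comm]
  simp only [Fin.ext_iff, Fin.val_add, Fin.val_one, eq_comm]

section PrefixSwap

variable {q r i : ℕ}

/-- The position of a vertex in its row, `Fin q` or `Fin r`. -/
def rowPosition : Fin q ⊕ Fin r → ℕ :=
  Sum.elim (fun a => a) (fun b => b)

/-- The position after that of `x`, taken modulo `q` in the row `Fin q` only. It labels `x` by the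
cut of both rows that comes right after `x`. -/
def cutAfter : Fin q ⊕ Fin r → ℕ :=
  Sum.elim (fun a => (a + 1) % q) (fun b => b + 1)

/-- The exchange of the initial segments of length `i` of the rows `Fin q` and `Fin r`; positions
that exist in one row only stay in place. -/
def prefixSwap (i : ℕ) : Fin q ⊕ Fin r → Fin q ⊕ Fin r
  | Sum.inl a => if h : (a : ℕ) < i ∧ (a : ℕ) < r then Sum.inr ⟨a, h.2⟩ else Sum.inl a
  | Sum.inr b => if h : (b : ℕ) < i ∧ (b : ℕ) < q then Sum.inl ⟨b, h.2⟩ else Sum.inr b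

/-- `CyclePathNext x y` says that `y` comes right after `x` in `C_q + P_r`, with the cycle
oriented by `a ↦ a + 1` modulo `q`. -/
def CyclePathNext (x y : Fin q ⊕ Fin r) : Prop :=
  rowPosition y = cutAfter x ∧ x.isLeft = y.isLeft

theorem cutAfter_eq_ite (x : Fin q ⊕ Fin r) :
    cutAfter x = if x.isLeft ∧ rowPosition x + 1 = q then 0 else rowPosition x + 1 := by
  rcases x with a | b
  · by_cases ha : (a : ℕ) + 1 = q
    · simp [cutAfter, rowPosition, ha]
    · have hmod : ((a : ℕ) + 1) % q = a + 1 := Nat.mod_eq_of_lt (by omega)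
      simp [cutAfter, rowPosition, ha, hmod]
  · simp [cutAfter, rowPosition]

theorem cycleGraph_sum_pathGraph_adj (hq : 2 ≤ q) (x y : Fin q ⊕ Fin r) :
    (cycleGraph q ⊕g pathGraph r).Adj x y ↔ CyclePathNext x y ∨ CyclePathNext y x := by
  rcases x with a | a <;> rcases y with b | b <;>
    simp [CyclePathNext, rowPosition, cutAfter, cycleGraph_adj_iff_mod hq, pathGraph_adj, eq_comm]

theorem val_finSumFinEquiv_add_one_eq_iff (x y : Fin q ⊕ Fin r) :
    (finSumFinEquiv x : ℕ) + 1 = finSumFinEquiv y ↔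
      rowPosition y = cutAfter x ∧ (x.isLeft = y.isLeft ↔ cutAfter x ≠ 0) := by
  rw [cutAfter_eq_ite]
  rcases x with a | a <;> rcases y with b | b <;>
    simp only [rowPosition, Sum.elim_inl, Sum.elim_inr, Sum.isLeft_inl, Sum.isLeft_inr,
      finSumFinEquiv_apply_left, finSumFinEquiv_apply_right, Fin.val_castAdd, Fin.val_natAdd] <;>
    grind

theorem prefixSwap_involutive (i : ℕ) :
    Function.Involutive (prefixSwap i : Fin q ⊕ Fin r → Fin q ⊕ Fin r) := by
  rintro (a | b)
  · by_cases h : (a : ℕ) < i ∧ (a : ℕ) < r <;> simp [prefixSwap, h]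
  · by_cases h : (b : ℕ) < i ∧ (b : ℕ) < q <;> simp [prefixSwap, h]

theorem rowPosition_prefixSwap (i : ℕ) (x : Fin q ⊕ Fin r) :
    rowPosition (prefixSwap i x) = rowPosition x := by
  rcases x with a | b <;> simp only [prefixSwap] <;> split_ifs <;> rfl

theorem cutAfter_prefixSwap (hi : i < q) (x : Fin q ⊕ Fin r) :
    cutAfter (prefixSwap i x) = cutAfter x := by
  have add_one_mod {a : ℕ} (ha : a < i) : (a + 1) % q = a + 1 := Nat.mod_eq_of_lt (by omega)
  rcases x with a | b <;> simp only [prefixSwap] <;> split_ifs with h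
  · exact (add_one_mod h.1).symm
  · rfl
  · exact add_one_mod h.1
  · rfl

-- The label rules out that `rowPosition x = i - 1 = r` lies beyond the end of the second row.
theorem isLeft_prefixSwap (hiq : i < q) (hir : i ≤ r + 1) {x : Fin q ⊕ Fin r}
    (hx : cutAfter x ≠ i) :
    (prefixSwap i x).isLeft = if rowPosition x < i then !x.isLeft else x.isLeft := by
  have partner_bounds (h : rowPosition x < i) : rowPosition x < q ∧ rowPosition x < r := by
    have hlast : rowPosition x + 1 ≠ q := by omega
    rw [cutAfter_eq_ite, if_neg (fun hwrap => hlast hwrap.2)] at hx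
    omega
  rcases x with a | b <;>
    simp only [prefixSwap, rowPosition, Sum.elim_inl, Sum.elim_inr] at partner_bounds ⊢
  · by_cases h : (a : ℕ) < i
    · simp [h, partner_bounds h]
    · simp [h]
  · by_cases h : (b : ℕ) < i
    · simp [h, partner_bounds h]
    · simp [h]

theorem isLeft_prefixSwap_eq_iff (hiq : i < q) (hir : i ≤ r + 1) {x y : Fin q ⊕ Fin r}
    (hx : cutAfter x ≠ i) (hy : cutAfter y ≠ i) (hxy : rowPosition y = cutAfter x) :
    (prefixSwap i x).isLeft = (prefixSwap i y).isLeft ↔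
      (x.isLeft = y.isLeft ↔ cutAfter x ≠ 0) := by
  rw [isLeft_prefixSwap hiq hir hx, isLeft_prefixSwap hiq hir hy]
  have hcut := cutAfter_eq_ite x
  split_ifs at hcut with hlast
  · have hx_fixed : ¬ rowPosition x < i := by omega
    have hy_moved : rowPosition y < i := by omega
    simp [hx_fixed, hy_moved, hcut, Bool.eq_not, -Sum.bnot_isLeft]
  · have same_side : rowPosition x < i ↔ rowPosition y < i := by omega
    have hcut_ne : cutAfter x ≠ 0 := by omega
    by_cases h : rowPosition y < i <;> simp [same_side, h, hcut_ne, -Sum.bnot_isLeft]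

theorem cyclePathNext_prefixSwap_iff (hiq : i < q) (hir : i ≤ r + 1) {x y : Fin q ⊕ Fin r}
    (hx : cutAfter x ≠ i) (hy : cutAfter y ≠ i) :
    CyclePathNext (prefixSwap i x) (prefixSwap i y) ↔
      (finSumFinEquiv x : ℕ) + 1 = finSumFinEquiv y := by
  rw [CyclePathNext, rowPosition_prefixSwap, cutAfter_prefixSwap hiq,
    val_finSumFinEquiv_add_one_eq_iff]
  exact and_congr_right (isLeft_prefixSwap_eq_iff hiq hir hx hy)

theorem pathGraph_adj_iff_adj_prefixSwap (hq : 2 ≤ q) (hiq : i < q) (hir : i ≤ r + 1)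
    {x y : Fin q ⊕ Fin r} (hx : cutAfter x ≠ i) (hy : cutAfter y ≠ i) :
    (pathGraph (q + r)).Adj (finSumFinEquiv x) (finSumFinEquiv y) ↔
      (cycleGraph q ⊕g pathGraph r).Adj (prefixSwap i x) (prefixSwap i y) := by
  rw [pathGraph_adj, cycleGraph_sum_pathGraph_adj hq, cyclePathNext_prefixSwap_iff hiq hir hx hy,
    cyclePathNext_prefixSwap_iff hiq hir hy hx]

end PrefixSwap

/-- If `q ≥ k+1`, `q ≥ 3`, `r ≥ k-1` and `r ≥ 1`, then `P_{q+r}` and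
`C_q + P_r` have the same `k`-deck. -/
theorem stmt_3 (k q r : ℕ) (hq : k + 1 ≤ q) (hq3 : 3 ≤ q) (hr : k - 1 ≤ r) (hr1 : 1 ≤ r) :
    SameDeck (pathGraph (q + r)) (cycleGraph q ⊕g pathGraph r) k := by
  have cut_bounds (i : ℕ) (hi : i ∈ Finset.range (k + 1)) : i < q ∧ i ≤ r + 1 := by
    rw [Finset.mem_range] at hi
    omega
  refine sameDeck_of_labels (I := Finset.range (k + 1)) (by simp)
    (cutAfter ∘ finSumFinEquiv.symm) cutAfter
    (fun i => finSumFinEquiv.symm.trans (prefixSwap_involutive i).toPerm) ?_ ?_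
  · intro i hi x
    exact cutAfter_prefixSwap (cut_bounds i hi).1 _
  · intro i hi x y hx hy
    simpa using pathGraph_adj_iff_adj_prefixSwap (by omega) (cut_bounds i hi).1
      (cut_bounds i hi).2 hx hy
end

section
/- Let k, q, r be natural numbers with q ≥ k and r ≥ k and k ≥ 1. Then the disjoint union P_{q-1} + P_r and the disjoint union P_q + P_{r-1} have the same k-deck. -/
open SimpleGraph

/-
View `P_{q-1} + P_r` and `P_q + P_{r-1}` as the path `P_{q+r-1}` with one edge deleted: the edge
before, respectively after, the vertex `q - 1`. Colour each vertex by its distance to `q - 1`.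
A set of `k` vertices misses some distance `j ≤ k`, and reflecting the open ball of radius `j`
about `q - 1` while fixing all other vertices exchanges the two deleted edges without affecting
adjacency away from distance `j`. The reflection preserves distances, so the colours of a set
determine the reflection applied to it, and the correspondence of `k`-sets is reversible.
-/

section ColoredGraphs

variable {V W U C : Type*} {G : SimpleGraph V} {G' : SimpleGraph W} {H : SimpleGraph U}
  {col : V → C} {col' : W → C}

/-- `e` preserves the colours of all vertices and is an isomorphism from `G` to `G'` on the
vertices with colours in `A`. Vertices with other colours are matched too, but with no condition
on their adjacency. -/
structure IsColorIsoOn (G : SimpleGraph V) (G' : SimpleGraph W) (col : V → C) (col' : W → C)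
    (A : Set C) (e : V ≃ W) : Prop where
  color_apply : ∀ v, col' (e v) = col v
  adj_iff : ∀ u v, col u ∈ A → col v ∈ A → (G'.Adj (e u) (e v) ↔ G.Adj u v)

namespace IsColorIsoOn

variable {A : Set C} {e : V ≃ W}

theorem color_symm_apply (he : IsColorIsoOn G G' col col' A e) (w : W) :
    col (e.symm w) = col' w := by
  rw [← he.color_apply, e.apply_symm_apply]

protected theorem symm (he : IsColorIsoOn G G' col col' A e) :
    IsColorIsoOn G' G col' col A e.symm where
  color_apply := he.color_symm_apply
  adj_iff u v hu hv := by
    rw [← he.color_symm_apply] at hu hv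
    simpa only [e.apply_symm_apply] using (he.adj_iff _ _ hu hv).symm

theorem nonempty_induce_iso (he : IsColorIsoOn G G' col col' A e) {s : Finset V}
    (hs : ∀ v ∈ s, col v ∈ A) :
    Nonempty (G.induce (s : Set V) ≃g G'.induce (s.map e.toEmbedding : Set W)) :=
  ⟨⟨e.subtypeEquiv fun v => by simp, fun {u v} => he.adj_iff u v (hs u u.2) (hs v v.2)⟩⟩

theorem image_color_map [DecidableEq C] (he : IsColorIsoOn G G' col col' A e) (s : Finset V) :
    (s.map e.toEmbedding).image col' = s.image col := by
  classical
  rw [Finset.map_eq_image, Finset.image_image]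
  exact Finset.image_congr fun v _ => he.color_apply v

end IsColorIsoOn

theorem card_eq_of_induce_iso {s : Finset V}
    (h : Nonempty (G.induce (s : Set V) ≃g H)) : s.card = Nat.card U := by
  obtain ⟨f⟩ := h
  simpa using Nat.card_congr f.toEquiv

theorem card_eq_and_induce_iso_iff {k : ℕ} {H : SimpleGraph (Fin k)} {s : Finset V} :
    s.card = k ∧ Nonempty (G.induce (s : Set V) ≃g H) ↔ Nonempty (G.induce (s : Set V) ≃g H) :=
  and_iff_right_of_imp fun h => by simpa only [Nat.card_fin] using card_eq_of_induce_iso h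

variable [Fintype V] [Fintype W]

theorem copies_le_of_forall_isColorIsoOn
    (h : ∀ A : Finset C, A.card ≤ Nat.card U → ∃ e, IsColorIsoOn G G' col col' A e) :
    copies G H ≤ copies G' H := by
  classical
  have : Nonempty (V ≃ W) := ⟨(h ∅ (Nat.zero_le _)).choose⟩
  choose! e he using h
  have color_card {s : Finset V} (hs : Nonempty (G.induce (s : Set V) ≃g H)) :
      (s.image col).card ≤ Nat.card U :=
    Finset.card_image_le.trans (card_eq_of_induce_iso hs).le
  refine Set.ncard_le_ncard_of_injOn (fun s => s.map (e (s.image col)).toEmbedding) ?_ ?_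
    (Set.toFinite _)
  · intro s hs
    obtain ⟨f⟩ := (he _ (color_card hs)).nonempty_induce_iso fun v hv =>
      Finset.mem_coe.2 (Finset.mem_image_of_mem col hv)
    exact hs.map f.symm.trans
  · intro s hs t ht hst
    have same_colors : s.image col = t.image col := by
      simpa only [(he _ (color_card hs)).image_color_map, (he _ (color_card ht)).image_color_map]
        using congrArg (Finset.image col') hst
    simpa only [same_colors, Finset.map_inj] using hst

theorem copies_eq_of_forall_isColorIsoOn
    (h : ∀ A : Finset C, A.card ≤ Nat.card U → ∃ e, IsColorIsoOn G G' col col' A e) :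
    copies G H = copies G' H :=
  (copies_le_of_forall_isColorIsoOn h).antisymm <| copies_le_of_forall_isColorIsoOn fun A hA =>
    (h A hA).imp' Equiv.symm fun _ he => he.symm

theorem copies_congr (e : G ≃g G') : copies G H = copies G' H :=
  copies_eq_of_forall_isColorIsoOn (col := fun _ => ()) (col' := fun _ => ()) fun _ _ =>
    ⟨e.toEquiv, fun _ => rfl, fun _ _ _ _ => e.map_adj_iff⟩

theorem sameDeck_iff_forall_copies_eq {k : ℕ} :
    SameDeck G G' k ↔ ∀ H : SimpleGraph (Fin k), copies G H = copies G' H := by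
  simp only [SameDeck, copies, card_eq_and_induce_iso_iff]

end ColoredGraphs

section CutPath

/-- The path on `n` vertices without the edge joining `m - 1` to `m`. The condition that `u` and
`v` lie on the same side of `m` also covers `m = 0` and `n ≤ m`, where no edge is deleted. -/
def cutPath (n m : ℕ) : SimpleGraph (Fin n) where
  Adj u v := (pathGraph n).Adj u v ∧ ((u : ℕ) < m ↔ (v : ℕ) < m)
  symm := ⟨fun _ _ h => ⟨h.1.symm, h.2.symm⟩⟩
  loopless := ⟨fun _ h => h.1.ne rfl⟩

theorem cutPath_adj {n m : ℕ} {u v : Fin n} :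
    (cutPath n m).Adj u v ↔
      ((u : ℕ) + 1 = v ∨ (v : ℕ) + 1 = u) ∧ ((u : ℕ) < m ↔ (v : ℕ) < m) := by
  rw [← pathGraph_adj]
  rfl

/-- The disjoint union of two paths, laid end to end, as a cut path. -/
def sumPathGraphIsoCutPath {l m n : ℕ} (h : m + l = n) :
    pathGraph m ⊕g pathGraph l ≃g cutPath n m where
  toEquiv := finSumFinEquiv.trans (finCongr h)
  map_rel_iff' := by
    rintro (u | u) (v | v) <;> simp [cutPath_adj, pathGraph_adj, add_assoc]

/-- The distance from `p` to `m` along the path, used as the colour of `p`. -/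
def distTo {n : ℕ} (m : ℕ) (p : Fin n) : ℕ := ((p : ℤ) - m).natAbs

variable {n m j : ℕ}

/-- The reflection of the open ball of radius `j` about `m`, fixing all other vertices. The upper
end of the ball lies in the path by `hn`; the subtraction is truncated unless `j ≤ m + 1`. -/
def reflectBall (hn : m + j ≤ n) (p : Fin n) : Fin n :=
  if h : distTo m p < j then ⟨2 * m - p, by unfold distTo at h; omega⟩ else p

theorem coe_reflectBall (hm : j ≤ m + 1) (hn : m + j ≤ n) (p : Fin n) :
    (reflectBall hn p : ℤ) = if distTo m p < j then 2 * m - (p : ℤ) else p := by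
  unfold reflectBall distTo
  split_ifs
  · dsimp only
    omega
  · rfl

theorem distTo_reflectBall (hm : j ≤ m + 1) (hn : m + j ≤ n) (p : Fin n) :
    distTo m (reflectBall hn p) = distTo m p := by
  have := coe_reflectBall hm hn p
  unfold distTo at *
  split_ifs at this <;> omega

theorem reflectBall_involutive (hm : j ≤ m + 1) (hn : m + j ≤ n) :
    Function.Involutive (reflectBall hn) := by
  intro p
  have h₁ := coe_reflectBall hm hn p
  have h₂ := coe_reflectBall hm hn (reflectBall hn p)
  rw [distTo_reflectBall hm] at h₂
  ext
  split_ifs at h₁ h₂ <;> omega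

theorem cutPath_adj_reflectBall (hm : j ≤ m + 1) (hn : m + j ≤ n) {u v : Fin n}
    (hu : distTo m u ≠ j) (hv : distTo m v ≠ j) :
    (cutPath n (m + 1)).Adj (reflectBall hn u) (reflectBall hn v) ↔
      (cutPath n m).Adj u v := by
  have hu' := coe_reflectBall hm hn u
  have hv' := coe_reflectBall hm hn v
  rw [cutPath_adj, cutPath_adj]
  unfold distTo at *
  split_ifs at hu' hv' <;> omega

theorem isColorIsoOn_reflectBall (hm : j ≤ m + 1) (hn : m + j ≤ n) {A : Set ℕ} (hj : j ∉ A) :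
    IsColorIsoOn (cutPath n m) (cutPath n (m + 1)) (distTo m) (distTo m) A
      (reflectBall_involutive hm hn).toPerm where
  color_apply := distTo_reflectBall hm hn
  adj_iff _ _ hu hv :=
    cutPath_adj_reflectBall hm hn (ne_of_mem_of_not_mem hu hj) (ne_of_mem_of_not_mem hv hj)

theorem copies_cutPath_succ {U : Type*} {H : SimpleGraph U}
    (hm : Nat.card U ≤ m + 1) (hn : m + Nat.card U ≤ n) :
    copies (cutPath n m) H = copies (cutPath n (m + 1)) H := by
  refine copies_eq_of_forall_isColorIsoOn (col := distTo m) (col' := distTo m) fun A hA => ?_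
  obtain ⟨j, hj, hjA⟩ : ∃ j ∈ Finset.range (Nat.card U + 1), j ∉ A :=
    Finset.exists_mem_notMem_of_card_lt_card (by rw [Finset.card_range]; omega)
  rw [Finset.mem_range] at hj
  exact ⟨_, isColorIsoOn_reflectBall (by omega) (by omega) (Finset.mem_coe.not.2 hjA)⟩

end CutPath

/-- If `q, r ≥ k ≥ 1`, then `P_{q-1} + P_r` and `P_q + P_{r-1}` have the
same `k`-deck. -/
theorem stmt_4 (k q r : ℕ) (hq : k ≤ q) (hr : k ≤ r) (hk : 1 ≤ k) :
    SameDeck (pathGraph (q - 1) ⊕g pathGraph r) (pathGraph q ⊕g pathGraph (r - 1)) k := by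
  have hq₁ : q - 1 + 1 = q := by omega
  refine sameDeck_iff_forall_copies_eq.2 fun H => ?_
  calc copies (pathGraph (q - 1) ⊕g pathGraph r) H
    _ = copies (cutPath (q - 1 + r) (q - 1)) H := copies_congr (sumPathGraphIsoCutPath rfl)
    _ = copies (cutPath (q - 1 + r) (q - 1 + 1)) H :=
      copies_cutPath_succ (by simpa [hq₁]) (by simpa)
    _ = copies (cutPath (q - 1 + r) q) H := by rw [hq₁]
    _ = copies (pathGraph q ⊕g pathGraph (r - 1)) H :=
      (copies_congr (sumPathGraphIsoCutPath (by omega))).symm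
end

section
/- For every natural number n ≥ 6: (a) every finite simple graph having the same ⌊n/2⌋-deck as the cycle C_n is isomorphic to C_n; and (b) there exists a finite simple graph not isomorphic to C_n having the same (⌊n/2⌋−1)-deck as C_n. Hence ρ(C_n) = ⌊n/2⌋. -/
open SimpleGraph

/-!
By Kelly's lemma the `k`-deck determines the number of labelled copies of every graph on at most
`k` vertices. Counting stars with one and two leaves gives the first two moments of the degree
sequence, so for `k ≥ 3` a graph `H` with the `k`-deck of `C_n` has degree variance `0` and is a
disjoint union of cycles. A component of length at most `k` would show up as a cycle in `C_n`,
hence every component has more than `k` vertices; as `n ≤ 2 * k + 1`, there is only one.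

Conversely let `k < a ≤ b`. A `k`-set of vertices of `C_a ⊔ C_b` misses some position `i < a` in
both cycles. Once the two vertices at position `i` are gone, exchanging the first `i` vertices of
the two cycles turns `C_a ⊔ C_b` into `C_{a+b}`. This exchange preserves positions, so choosing `i`
as a function of the set of occupied positions makes the map on `k`-sets a bijection.
-/

section Deck

variable {V W : Type*} {k : ℕ}

/-- Isomorphism of simple graphs on `Fin k`; its classes index the cards of a `k`-deck. -/
def isoSetoid (k : ℕ) : Setoid (SimpleGraph (Fin k)) where
  r A B := Nonempty (A ≃g B)
  iseqv := ⟨fun _ ↦ ⟨Iso.refl⟩, fun ⟨e⟩ ↦ ⟨e.symm⟩, fun ⟨e⟩ ⟨f⟩ ↦ ⟨e.trans f⟩⟩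

/-- The card of the `k`-deck of `G` given by the vertex set `S`: the isomorphism class of the
subgraph that `S` induces. -/
noncomputable def inducedClass (G : SimpleGraph V) (S : {S : Finset V // S.card = k}) :
    Quotient (isoSetoid k) :=
  ⟦(G.induce (S.1 : Set V)).map (S.1.equivFinOfCardEq S.2).toEmbedding⟧

theorem inducedClass_eq_mk_iff {G : SimpleGraph V} {S : {S : Finset V // S.card = k}}
    {H : SimpleGraph (Fin k)} :
    inducedClass G S = ⟦H⟧ ↔ Nonempty (G.induce (S.1 : Set V) ≃g H) := by
  have e := Iso.map (S.1.equivFinOfCardEq S.2) (G.induce (S.1 : Set V))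
  rw [inducedClass, Quotient.eq]
  exact ⟨fun ⟨f⟩ ↦ ⟨e.trans f⟩, fun ⟨f⟩ ↦ ⟨e.symm.trans f⟩⟩

theorem inducedClass_eq_iff {G : SimpleGraph V} {G' : SimpleGraph W}
    {S : {S : Finset V // S.card = k}} {T : {T : Finset W // T.card = k}} :
    inducedClass G S = inducedClass G' T ↔
      Nonempty (G.induce (S.1 : Set V) ≃g G'.induce (T.1 : Set W)) := by
  have e := Iso.map (T.1.equivFinOfCardEq T.2) (G'.induce (T.1 : Set W))
  rw [inducedClass.eq_1 G', inducedClass_eq_mk_iff]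
  exact ⟨fun ⟨f⟩ ↦ ⟨f.trans e.symm⟩, fun ⟨f⟩ ↦ ⟨f.trans e⟩⟩

theorem natCard_inducedClass_eq_mk (G : SimpleGraph V) (H : SimpleGraph (Fin k)) :
    Nat.card {S : {S : Finset V // S.card = k} // inducedClass G S = ⟦H⟧} =
      {S : Finset V | S.card = k ∧ Nonempty (G.induce (S : Set V) ≃g H)}.ncard := by
  rw [← Nat.card_coe_set_eq]
  exact Nat.card_congr ((Equiv.subtypeEquivRight fun _ ↦ inducedClass_eq_mk_iff).trans
    (Equiv.subtypeSubtypeEquivSubtypeInter (fun S : Finset V ↦ S.card = k)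
      fun S ↦ Nonempty (G.induce (S : Set V) ≃g H)))

variable [Fintype V] [Fintype W] {G : SimpleGraph V} {G' : SimpleGraph W}

theorem SameDeck.exists_equiv (h : SameDeck G G' k) :
    ∃ φ : {S : Finset V // S.card = k} ≃ {T : Finset W // T.card = k},
      ∀ S, Nonempty (G.induce (S.1 : Set V) ≃g G'.induce ((φ S).1 : Set W)) := by
  have fiber_equiv (c : Quotient (isoSetoid k)) :
      Nonempty ({S // inducedClass G S = c} ≃ {T // inducedClass G' T = c}) := by
    induction c using Quotient.inductionOn with
    | h H =>
      rw [← Finite.card_eq, natCard_inducedClass_eq_mk, natCard_inducedClass_eq_mk]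
      exact h H
  let e := fun c ↦ (fiber_equiv c).some
  exact ⟨Equiv.ofFiberEquiv e, fun S ↦ inducedClass_eq_iff.1 (Equiv.ofFiberEquiv_map e S).symm⟩

theorem choose_lt_choose {a b : ℕ} (hk : 1 ≤ k) (hkb : k ≤ b) (hab : a < b) :
    a.choose k < b.choose k := by
  obtain ⟨k, rfl⟩ := Nat.exists_eq_add_of_le' hk
  obtain ⟨b, rfl⟩ := Nat.exists_eq_add_of_le' (Nat.one_le_of_lt hab)
  rw [Nat.choose_succ_succ' b]
  have := Nat.choose_pos (n := b) (k := k) (by omega)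
  have := Nat.choose_le_choose (k + 1) (show a ≤ b by omega)
  omega

theorem SameDeck.fintypeCard_eq (h : SameDeck G G' k) (hk : 1 ≤ k) (hkW : k ≤ Fintype.card W) :
    Fintype.card V = Fintype.card W := by
  obtain ⟨φ, -⟩ := h.exists_equiv
  have choose_eq : (Fintype.card V).choose k = (Fintype.card W).choose k := by
    simpa only [Fintype.card_finset_len] using Fintype.card_congr φ
  rcases lt_trichotomy (Fintype.card V) (Fintype.card W) with hlt | heq | hgt
  · exact absurd choose_eq (choose_lt_choose hk hkW hlt).ne
  · exact heq
  · exact absurd choose_eq (choose_lt_choose hk (hkW.trans hgt.le) hgt).ne'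

end Deck

section Kelly

variable {α V W : Type*} {A : SimpleGraph α} {G : SimpleGraph V} {G' : SimpleGraph W} {k : ℕ}

/-- Double counting of the pairs consisting of a `k`-set of vertices and a labelled copy of `A`
inside it. -/
def copySigmaEquiv (A : SimpleGraph α) (G : SimpleGraph V) (k : ℕ) :
    (Σ S : {S : Finset V // S.card = k}, Copy A (G.induce (S.1 : Set V))) ≃
      Σ f : Copy A G, {S : {S : Finset V // S.card = k} // ∀ a, f a ∈ S.1} where
  toFun p := ⟨(Copy.induce G _).comp p.2, p.1, fun a ↦ (p.2 a).2⟩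
  invFun p := ⟨p.2.1, ⟨fun a ↦ ⟨p.1 a, p.2.2 a⟩, fun h ↦ p.1.toHom.map_adj h⟩,
    fun _ _ h ↦ p.1.injective (congrArg Subtype.val h)⟩

/-- Isomorphic graphs have the same labelled copies of `A`. -/
def copyCongr (e : G ≃g G') : Copy A G ≃ Copy A G' where
  toFun f := e.toCopy.comp f
  invFun f := e.symm.toCopy.comp f
  left_inv f := by ext; simp
  right_inv f := by ext; simp

theorem natCard_superset_range [Fintype α] [Fintype V] {f : α → V} (hf : f.Injective)
    (hk : Fintype.card α ≤ k) :
    Nat.card {S : {S : Finset V // S.card = k} // ∀ a, f a ∈ S.1} =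
      (Fintype.card V - Fintype.card α).choose (k - Fintype.card α) := by
  classical
  have card_image : (Finset.univ.image f).card = Fintype.card α := by
    rw [Finset.card_image_of_injective _ hf, Finset.card_univ]
  rw [← card_image, ← Finset.card_univ (α := V),
    ← Finset.card_filter_powersetCard_subset _ _ k (Finset.subset_univ _) (card_image.trans_le hk),
    Nat.card_congr (Equiv.subtypeSubtypeEquivSubtypeInter
      (fun S : Finset V ↦ S.card = k) (fun S ↦ ∀ a, f a ∈ S)), ← Nat.card_eq_finsetCard]
  refine Nat.card_congr (Equiv.subtypeEquivRight fun S ↦ ?_)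
  simp [Finset.mem_powersetCard, Finset.image_subset_iff]

theorem labelledCopyCount_eq_natCard [Fintype α] [Fintype V] (A : SimpleGraph α)
    (G : SimpleGraph V) : G.labelledCopyCount A = Nat.card (Copy A G) := by
  classical rw [labelledCopyCount, Nat.card_eq_fintype_card]

theorem sum_labelledCopyCount_induce [Fintype α] [Fintype V] (A : SimpleGraph α)
    (G : SimpleGraph V) (hk : Fintype.card α ≤ k) :
    ∑ S : {S : Finset V // S.card = k}, (G.induce (S.1 : Set V)).labelledCopyCount A =
      G.labelledCopyCount A * (Fintype.card V - Fintype.card α).choose (k - Fintype.card α) := by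
  classical
  simp_rw [labelledCopyCount_eq_natCard]
  rw [← Nat.card_sigma, Nat.card_congr (copySigmaEquiv A G k), Nat.card_sigma,
    Finset.sum_congr rfl fun f _ ↦ natCard_superset_range f.injective hk]
  simp

variable [Fintype V] [Fintype W]

theorem SameDeck.labelledCopyCount_eq [Fintype α] (h : SameDeck G G' k) (A : SimpleGraph α)
    (hk : 1 ≤ k) (hαk : Fintype.card α ≤ k) (hkW : k ≤ Fintype.card W) :
    G.labelledCopyCount A = G'.labelledCopyCount A := by
  obtain ⟨φ, iso⟩ := h.exists_equiv
  have copies_eq : ∑ S : {S : Finset V // S.card = k},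
        (G.induce (S.1 : Set V)).labelledCopyCount A =
      ∑ T : {T : Finset W // T.card = k}, (G'.induce (T.1 : Set W)).labelledCopyCount A :=
    Fintype.sum_equiv φ _ _ fun S ↦ by
      simpa only [labelledCopyCount_eq_natCard] using Nat.card_congr (copyCongr (iso S).some)
  rw [sum_labelledCopyCount_induce A G hαk, sum_labelledCopyCount_induce A G' hαk,
    h.fintypeCard_eq hk hkW] at copies_eq
  exact Nat.eq_of_mul_eq_mul_right (Nat.choose_pos (by omega)) copies_eq

end Kelly

section Degrees

variable {α V W : Type*} {G : SimpleGraph V} {k d : ℕ}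

/-- A labelled star in `G` is a centre together with an injection of the leaves into its
neighbourhood. -/
def copyStarGraphEquiv (α : Type*) (G : SimpleGraph V) :
    Copy (starGraph (none : Option α)) G ≃ Σ v, (α ↪ G.neighborSet v) where
  toFun f := ⟨f none, fun a ↦ ⟨f (some a), f.toHom.map_adj (by simp [starGraph_adj])⟩,
    fun _ _ h ↦ Option.some_injective _ (f.injective (congrArg Subtype.val h))⟩
  invFun p := by
    refine ⟨⟨fun o ↦ o.elim p.1 fun a ↦ p.2 a, ?_⟩, ?_⟩
    · rintro (_ | a) (_ | b) hab
      · simp at hab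
      · exact (p.2 b).2
      · exact (p.2 a).2.symm
      · simp at hab
    · rintro (_ | a) (_ | b) hab
      · rfl
      · exact absurd hab (p.2 b).2.ne
      · exact absurd hab (p.2 a).2.ne'
      · exact congrArg some (p.2.injective (Subtype.ext hab))
  left_inv f := by ext (_ | a) <;> rfl
  right_inv _ := rfl

theorem labelledCopyCount_starGraph [Fintype α] [Fintype V] [G.LocallyFinite] :
    G.labelledCopyCount (starGraph (none : Option α)) =
      ∑ v, (G.degree v).descFactorial (Fintype.card α) := by
  classical
  rw [labelledCopyCount_eq_natCard, Nat.card_congr (copyStarGraphEquiv α G), Nat.card_sigma]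
  simp only [Nat.card_eq_fintype_card, Fintype.card_embedding_eq, card_neighborSet_eq_degree]

theorem sq_sub_eq_descFactorial (m d : ℕ) :
    ((m : ℤ) - d) ^ 2 = m.descFactorial 2 + (1 - 2 * d) * m.descFactorial 1 +
      d ^ 2 * m.descFactorial 0 := by
  rcases m with _ | m
  · simp
  · simp only [Nat.descFactorial_succ, Nat.descFactorial_zero, Nat.sub_zero, Nat.add_sub_cancel]
    push_cast
    ring

variable [Fintype V] [Fintype W] {G' : SimpleGraph W} [G.LocallyFinite] [G'.LocallyFinite]

theorem SameDeck.sum_degree_descFactorial_eq (h : SameDeck G G' k) {j : ℕ} (hjk : j < k)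
    (hkW : k ≤ Fintype.card W) :
    ∑ v, (G.degree v).descFactorial j = ∑ w, (G'.degree w).descFactorial j := by
  simpa only [labelledCopyCount_starGraph, Fintype.card_fin] using
    h.labelledCopyCount_eq (starGraph (none : Option (Fin j))) (by omega) (by simpa) hkW

theorem SameDeck.isRegularOfDegree (h : SameDeck G G' k) (hk : 3 ≤ k) (hkW : k ≤ Fintype.card W)
    (hG' : G'.IsRegularOfDegree d) : G.IsRegularOfDegree d := by
  have sum_sq_eq : ∑ v, ((G.degree v : ℤ) - d) ^ 2 = ∑ w, ((G'.degree w : ℤ) - d) ^ 2 := by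
    simp only [sq_sub_eq_descFactorial, Finset.sum_add_distrib, ← Finset.mul_sum,
      ← Nat.cast_sum]
    rw [h.sum_degree_descFactorial_eq (j := 0) (by omega) hkW,
      h.sum_degree_descFactorial_eq (j := 1) (by omega) hkW,
      h.sum_degree_descFactorial_eq (j := 2) (by omega) hkW]
  simp only [hG'.degree_eq, sub_self, zero_pow two_ne_zero, Finset.sum_const_zero] at sum_sq_eq
  intro v
  have sq_eq_zero := (Finset.sum_eq_zero_iff_of_nonneg fun _ _ ↦ sq_nonneg _).1 sum_sq_eq v
    (Finset.mem_univ v)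
  exact_mod_cast sub_eq_zero.1 (pow_eq_zero_iff two_ne_zero |>.1 sq_eq_zero)

end Degrees

section TwoRegular

variable {V W : Type*} {A : SimpleGraph V} {G : SimpleGraph W} {m n d : ℕ}

theorem nonempty_iso_of_isContained [Fintype V] [Fintype W] [LocallyFinite A] [LocallyFinite G]
    (hA : A.IsRegularOfDegree d) (hG : G.IsRegularOfDegree d)
    (hcard : Fintype.card V = Fintype.card W) (hAG : A ⊑ G) : Nonempty (A ≃g G) := by
  obtain ⟨f⟩ := hAG
  have f_bijective : Function.Bijective f :=
    (Fintype.bijective_iff_injective_and_card f).2 ⟨f.injective, hcard⟩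
  refine ⟨⟨Equiv.ofBijective f f_bijective, fun {u v} ↦ ⟨fun h ↦ ?_, fun h ↦ f.toHom.map_adj h⟩⟩⟩
  have nbr_surjective : Function.Surjective (f.mapNeighborSet u) :=
    ((Fintype.bijective_iff_injective_and_card _).2 ⟨(f.mapNeighborSet u).injective, by
      simp only [card_neighborSet_eq_degree, hA.degree_eq, hG.degree_eq]⟩).2
  obtain ⟨w, hw⟩ := nbr_surjective ⟨f v, h⟩
  exact f.injective (congrArg Subtype.val hw) ▸ w.2

theorem isRegularOfDegree_two_cycleGraph (hn : 3 ≤ n) : (cycleGraph n).IsRegularOfDegree 2 := by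
  obtain ⟨n, rfl⟩ := Nat.exists_eq_add_of_le' hn
  exact fun _ ↦ cycleGraph_degree_three_le

theorem supp_eq_univ (hG : G.Preconnected) (c : G.ConnectedComponent) : c.supp = Set.univ := by
  rw [Set.eq_univ_iff_forall]
  obtain ⟨v, rfl⟩ := c.exists_rep
  exact fun w ↦ ConnectedComponent.sound (hG w v)

variable [LocallyFinite G]

theorem isCycles_of_isRegularOfDegree_two (hG : G.IsRegularOfDegree 2) : G.IsCycles := by
  intro v _
  rw [Set.ncard_eq_toFinset_card', ← hG.degree_eq v]
  rfl

theorem length_eq_ncard_supp (hG : G.IsCycles) {u : W} {p : G.Walk u u} (hp : p.IsCycle) :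
    p.length = (G.connectedComponentMk u).supp.ncard := by
  classical
  obtain ⟨c, hc⟩ := p.toSubgraph_connected.exists_verts_eq_connectedComponentSupp
    fun v hv w ↦ ((hp.adj_toSubgraph_iff_of_isCycles hG hv) w).2
  have hu : u ∈ c.supp := hc ▸ p.start_mem_verts_toSubgraph
  have verts_eq : p.toSubgraph.verts = (p.support.tail.toFinset : Set W) := by
    ext v
    have := p.mem_support_iff (w := v)
    have := p.end_mem_tail_support hp.not_nil
    simp only [Walk.mem_verts_toSubgraph, List.coe_toFinset, Set.mem_ofPred_eq]
    grind
  rw [ConnectedComponent.mem_supp_iff] at hu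
  rw [hu, ← hc, verts_eq, Set.ncard_coe_finset, List.toFinset_card_of_nodup hp.support_nodup]
  simp

theorem cycleGraph_ncard_supp_isContained [Finite W] (hG : G.IsRegularOfDegree 2)
    (c : G.ConnectedComponent) : 3 ≤ c.supp.ncard ∧ cycleGraph c.supp.ncard ⊑ G := by
  have cycles := isCycles_of_isRegularOfDegree_two hG
  obtain ⟨v, rfl⟩ := c.exists_rep
  have nbr_nonempty : (G.neighborSet v).Nonempty := by
    rw [← degree_pos_iff_nonempty, hG.degree_eq]
    simp
  obtain ⟨p, hp, -⟩ := cycles.exists_cycle_toSubgraph_verts_eq_connectedComponentSupp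
    (c := G.connectedComponentMk v) rfl nbr_nonempty
  have length_eq := length_eq_ncard_supp cycles hp
  have three_le := length_eq ▸ hp.three_le_length
  exact ⟨three_le, (cycleGraph_isContained_iff three_le).2 ⟨v, p, hp, length_eq⟩⟩

theorem eq_natCard_of_cycleGraph_isContained (hG : G.IsCycles) (hconn : G.Preconnected)
    (hm : 3 ≤ m) (h : cycleGraph m ⊑ G) : m = Nat.card W := by
  obtain ⟨v, p, hp, rfl⟩ := (cycleGraph_isContained_iff hm).1 h
  rw [length_eq_ncard_supp hG hp, supp_eq_univ hconn, Set.ncard_univ]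

theorem eq_of_cycleGraph_isContained (hm : 3 ≤ m) (h : cycleGraph m ⊑ cycleGraph n) : m = n := by
  obtain ⟨f⟩ := h
  have m_le_n : m ≤ n := by simpa using Fintype.card_le_of_injective f f.injective
  have cycles := isCycles_of_isRegularOfDegree_two
    (isRegularOfDegree_two_cycleGraph (hm.trans m_le_n))
  simpa using eq_natCard_of_cycleGraph_isContained cycles cycleGraph_preconnected hm ⟨f⟩

end TwoRegular

section Reconstruction

variable {W : Type*} [Fintype W] {H : SimpleGraph W} {k n : ℕ}

theorem nonempty_iso_cycleGraph_of_connected [LocallyFinite H]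
    (hH : H.IsRegularOfDegree 2) (hconn : H.Connected) :
    Nonempty (H ≃g cycleGraph (Fintype.card W)) := by
  obtain ⟨v⟩ := hconn.nonempty
  obtain ⟨three_le, contained⟩ :=
    cycleGraph_ncard_supp_isContained hH (H.connectedComponentMk v)
  rw [supp_eq_univ hconn.preconnected, Set.ncard_univ, Nat.card_eq_fintype_card]
    at three_le contained
  exact (nonempty_iso_of_isContained (isRegularOfDegree_two_cycleGraph three_le) hH (by simp)
    contained).map Iso.symm

theorem preconnected_of_card_lt_two_mul_ncard_supp
    (hH : ∀ c : H.ConnectedComponent, Fintype.card W < 2 * c.supp.ncard) : H.Preconnected := by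
  intro u v
  by_contra not_reachable
  have disj : Disjoint (H.connectedComponentMk u).supp (H.connectedComponentMk v).supp :=
    pairwise_disjoint_supp_connectedComponent H
      (mt ConnectedComponent.exact not_reachable)
  have union_le :=
    Set.ncard_le_card ((H.connectedComponentMk u).supp ∪ (H.connectedComponentMk v).supp)
  rw [Set.ncard_union_eq disj, Nat.card_eq_fintype_card] at union_le
  have := hH (H.connectedComponentMk u)
  have := hH (H.connectedComponentMk v)
  omega

theorem SameDeck.nonempty_iso_cycleGraph (h : SameDeck H (cycleGraph n) k) (hk : 3 ≤ k)
    (hkn : k ≤ n) (hnk : n ≤ 2 * k + 1) : Nonempty (H ≃g cycleGraph n) := by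
  classical
  have hkn' : k ≤ Fintype.card (Fin n) := by simpa
  have card_eq : Fintype.card W = n := by simpa using h.fintypeCard_eq (by omega) hkn'
  have regular : H.IsRegularOfDegree 2 :=
    h.isRegularOfDegree hk hkn' (isRegularOfDegree_two_cycleGraph (hk.trans hkn))
  have large_component (c : H.ConnectedComponent) : Fintype.card W < 2 * c.supp.ncard := by
    obtain ⟨three_le, contained⟩ := cycleGraph_ncard_supp_isContained regular c
    by_contra! small
    have contained' : cycleGraph c.supp.ncard ⊑ cycleGraph n := by
      rw [← labelledCopyCount_pos, ← h.labelledCopyCount_eq _ (by omega) ?_ hkn',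
        labelledCopyCount_pos]
      · exact contained
      · rw [Fintype.card_fin]
        omega
    have := eq_of_cycleGraph_isContained three_le contained'
    omega
  have : Nonempty W := Fintype.card_pos_iff.1 (by omega)
  rw [← card_eq]
  exact nonempty_iso_cycleGraph_of_connected regular
    ⟨preconnected_of_card_lt_two_mul_ncard_supp large_component⟩

end Reconstruction

section Colouring

variable {V W : Type*} [Fintype V] [Fintype W] {G : SimpleGraph V} {G' : SimpleGraph W} {k : ℕ}

theorem sameDeck_of_equiv (φ : Finset V ≃ Finset W)
    (hcard : ∀ S : Finset V, (φ S).card = S.card)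
    (hiso : ∀ S : Finset V, S.card = k →
      Nonempty (G.induce (S : Set V) ≃g G'.induce (φ S : Set W))) :
    SameDeck G G' k := by
  intro H
  rw [← Nat.card_coe_set_eq, ← Nat.card_coe_set_eq]
  refine Nat.card_congr (φ.subtypeEquiv fun S ↦ ?_)
  simp only [Set.mem_ofPred_eq, hcard]
  refine and_congr_right fun hS ↦ ?_
  obtain ⟨e⟩ := hiso S hS
  exact ⟨fun ⟨f⟩ ↦ ⟨e.symm.trans f⟩, fun ⟨f⟩ ↦ ⟨e.trans f⟩⟩

theorem sameDeck_of_forall_color {ι : Type*} {c : V → ι} {d : W → ι} {σ : ι → V ≃ W} {I : Finset ι}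
    (hcolor : ∀ i v, d (σ i v) = c v)
    (hadj : ∀ i ∈ I, ∀ u v, c u ≠ i → c v ≠ i → (G'.Adj (σ i u) (σ i v) ↔ G.Adj u v))
    (hk : k < I.card) : SameDeck G G' k := by
  classical
  obtain ⟨i₀, -⟩ := Finset.card_pos.1 (Nat.zero_lt_of_lt hk)
  have : Nonempty ι := ⟨i₀⟩
  choose! free free_mem free_notMem using fun (T : Finset ι) (hT : T.card < I.card) ↦
    Finset.exists_mem_notMem_of_card_lt_card hT
  have image_map (S : Finset V) (i : ι) : (S.map (σ i).toEmbedding).image d = S.image c := by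
    simp [Finset.map_eq_image, Finset.image_image, Function.comp_def, hcolor]
  have image_map_symm (T : Finset W) (i : ι) :
      (T.map (σ i).symm.toEmbedding).image c = T.image d := by
    simp [Finset.map_eq_image, Finset.image_image, Function.comp_def, ← hcolor i]
  let φ : Finset V ≃ Finset W :=
    { toFun S := S.map (σ (free (S.image c))).toEmbedding
      invFun T := T.map (σ (free (T.image d))).symm.toEmbedding
      left_inv S := by ext; simp [image_map]
      right_inv T := by ext; simp [image_map_symm] }
  refine sameDeck_of_equiv φ (fun S ↦ Finset.card_map _) fun S hS ↦ ?_
  have image_card : (S.image c).card < I.card := (Finset.card_image_le.trans_eq hS).trans_lt hk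
  have free_ne (v : (S : Set V)) : c v ≠ free (S.image c) := fun h ↦
    free_notMem _ image_card (h ▸ Finset.mem_image_of_mem c v.2)
  exact ⟨(σ (free (S.image c))).subtypeEquiv fun v ↦ by simp [φ],
    fun {u v} ↦ hadj _ (free_mem _ image_card) u v (free_ne u) (free_ne v)⟩

end Colouring

section TwoCycles

variable {a b k n : ℕ}

theorem cycleGraph_adj_iff_val {u v : Fin n} :
    (cycleGraph n).Adj u v ↔ u ≠ v ∧ ((u : ℕ) + 1 = v ∨ (v : ℕ) + 1 = u ∨
      (u : ℕ) = 0 ∧ (v : ℕ) + 1 = n ∨ (v : ℕ) = 0 ∧ (u : ℕ) + 1 = n) := by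
  rw [cycleGraph_adj', ne_eq, Fin.ext_iff]
  rcases lt_trichotomy u v with huv | rfl | hvu
  · rw [Fin.coe_sub_iff_lt.2 huv, Fin.sub_val_of_le huv.le]
    omega
  · rw [Fin.sub_val_of_le le_rfl]
    omega
  · rw [Fin.coe_sub_iff_lt.2 hvu, Fin.sub_val_of_le hvu.le]
    omega

/-- The involution of the vertices of `C_a ⊔ C_b` exchanging the first `i` vertices of `C_a` with
the first `i` vertices of `C_b`, intended for `i ≤ a`. -/
def swapInitial (hab : a ≤ b) (i : ℕ) : Fin a ⊕ Fin b → Fin a ⊕ Fin b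
  | .inl x => if x < i then .inr (x.castLE hab) else .inl x
  | .inr y => if h : y < i ∧ y < a then .inl ⟨y, h.2⟩ else .inr y

/-- The position of a vertex of `C_a ⊔ C_b` within its cycle. It serves as the colour of the vertex,
as `swapInitial` preserves it. -/
def cyclePosition : Fin a ⊕ Fin b → ℕ := Sum.elim Fin.val Fin.val

theorem swapInitial_involutive (hab : a ≤ b) (i : ℕ) : Function.Involutive (swapInitial hab i) := by
  rintro (x | y) <;> simp only [swapInitial] <;> split_ifs <;> simp_all

theorem cyclePosition_swapInitial (hab : a ≤ b) (i : ℕ) (v : Fin a ⊕ Fin b) :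
    cyclePosition (swapInitial hab i v) = cyclePosition v := by
  rcases v with x | y <;> simp only [swapInitial] <;> split_ifs <;> rfl

theorem cycleGraph_adj_swapInitial_iff (hab : a ≤ b) {i : ℕ} (hi : i < a) {u v : Fin a ⊕ Fin b}
    (hu : cyclePosition u ≠ i) (hv : cyclePosition v ≠ i) :
    (cycleGraph (a + b)).Adj (finSumFinEquiv (swapInitial hab i u))
      (finSumFinEquiv (swapInitial hab i v)) ↔ (cycleGraph a ⊕g cycleGraph b).Adj u v := by
  rw [cycleGraph_adj_iff_val]
  rcases u with u | u <;> rcases v with v | v <;>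
    simp only [cyclePosition, Sum.elim_inl, Sum.elim_inr] at hu hv <;>
    simp only [swapInitial] <;> split_ifs <;>
    simp [cycleGraph_adj_iff_val, Fin.ext_iff] <;> omega

theorem sameDeck_sum_cycleGraph (hk : k < a) (hab : a ≤ b) :
    SameDeck (cycleGraph a ⊕g cycleGraph b) (cycleGraph (a + b)) k := by
  refine sameDeck_of_forall_color (c := cyclePosition) (d := cyclePosition ∘ finSumFinEquiv.symm)
    (σ := fun i ↦ (swapInitial_involutive hab i).toPerm.trans finSumFinEquiv)
    (I := Finset.range a) (fun i v ↦ ?_) (fun i hi u v hu hv ↦ ?_) (by simpa)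
  · simp [cyclePosition_swapInitial]
  · exact cycleGraph_adj_swapInitial_iff hab (Finset.mem_range.1 hi) hu hv

theorem exists_not_iso_cycleGraph_sameDeck (h : 2 * (k + 1) ≤ n) :
    ∃ (W : Type) (_ : Fintype W) (H : SimpleGraph W),
      ¬ Nonempty (H ≃g cycleGraph n) ∧ SameDeck H (cycleGraph n) k := by
  obtain ⟨b, rfl⟩ := Nat.exists_eq_add_of_le (show k + 1 ≤ n by omega)
  refine ⟨_, inferInstance, cycleGraph (k + 1) ⊕g cycleGraph b, ?_,
    sameDeck_sum_cycleGraph (Nat.lt_succ_self k) (by omega)⟩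
  rintro ⟨e⟩
  have : Nonempty (Fin b) := ⟨0, by omega⟩
  exact not_preconnected_sum (G := cycleGraph (k + 1)) (H := cycleGraph b)
    (e.preconnected_iff.2 cycleGraph_preconnected)

end TwoCycles

/-- For `n ≥ 6`: (a) every graph with the same `⌊n/2⌋`-deck as `C_n` is
isomorphic to `C_n`; (b) some graph not isomorphic to `C_n` has the same `(⌊n/2⌋-1)`-deck
as `C_n`; hence `ρ(C_n) = ⌊n/2⌋`. -/
theorem stmt_7 (n : ℕ) (hn : 6 ≤ n) :
    (∀ (W : Type) [Fintype W] (H : SimpleGraph W),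
      SameDeck H (cycleGraph n) (n / 2) → Nonempty (H ≃g cycleGraph n)) ∧
    (∃ (W : Type) (_ : Fintype W) (H : SimpleGraph W),
      ¬ Nonempty (H ≃g cycleGraph n) ∧ SameDeck H (cycleGraph n) (n / 2 - 1)) ∧
    IsLeast {k : ℕ | ∀ (W : Type) [Fintype W] (H : SimpleGraph W),
      SameDeck H (cycleGraph n) k → Nonempty (H ≃g cycleGraph n)} (n / 2) := by
  have part_a : ∀ (W : Type) [Fintype W] (H : SimpleGraph W),
      SameDeck H (cycleGraph n) (n / 2) → Nonempty (H ≃g cycleGraph n) :=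
    fun W _ H h ↦ h.nonempty_iso_cycleGraph (by omega) (by omega) (by omega)
  refine ⟨part_a, exists_not_iso_cycleGraph_sameDeck (by omega), part_a, fun k hk ↦ ?_⟩
  by_contra! k_lt
  obtain ⟨W, _, H, not_iso, same_deck⟩ :=
    exists_not_iso_cycleGraph_sameDeck (show 2 * (k + 1) ≤ n by omega)
  exact not_iso (hk W H same_deck)
end
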